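/- Let E be a category with finite products and small colimits such that for every object C of E the functor C × (−) : E ⥤ E preserves small colimits. Let B be a small category with finite products, C a locally small category, F : B ⥤ C any functor, and X : B ⥤ E a functor preserving finite products. Then the pointwise left Kan extension Lan_F X : C ⥤ E preserves finite products (i.e., all finite products that exist in C). -/

import Mathlib

/-!
STATEMENT 13: Let `E` be a category with finite products and small colimits such that
`C × (−)` preserves small colimits for every object `C` of `E`. Let `B` be a small category
with finite products, `C` a locally small category, `F : B ⥤ C` any functor, and
`X : B ⥤ E` a functor preserving finite products. Then the pointwise left Kan extension
`Lan_F X : C ⥤ E` preserves finite products (all finite products that exist in `C`).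
-/

open CategoryTheory CategoryTheory.Limits

universe u v w e

section PointwiseProduct

variable {E : Type e} [Category.{w} E] [HasFiniteProducts E]

lemma preservesColimits_prod_functor_flip_obj (A : E)
    [PreservesColimitsOfSize.{u, u} (prod.functor.obj A)] :
    PreservesColimitsOfSize.{u, u} (prod.functor.flip.obj A) :=
  preservesColimits_of_natIso
    (NatIso.ofComponents (fun Z ↦ prod.braiding A Z) fun f ↦ braid_natural (𝟙 A) f :
      prod.functor.obj A ≅ prod.functor.flip.obj A)

lemma prod_map_id_left_comp_map_id_right {Z Z' W W' T : E} (f : Z ⟶ Z') (g : W ⟶ W')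
    (h : Z' ⨯ W' ⟶ T) :
    prod.map (𝟙 Z) g ≫ prod.map f (𝟙 W') ≫ h = prod.map f g ≫ h := by
  rw [prod.map_map_assoc, Category.id_comp, Category.comp_id]

lemma prod_map_id_right_comp_map_id_left {Z Z' W W' T : E} (f : Z ⟶ Z') (g : W ⟶ W')
    (h : Z' ⨯ W' ⟶ T) :
    prod.map f (𝟙 W) ≫ prod.map (𝟙 Z') g ≫ h = prod.map f g ≫ h := by
  rw [prod.map_map_assoc, Category.id_comp, Category.comp_id]

/-- The product of a family indexed by `Fin (n + 1)` splits off the factor at `0`. -/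
noncomputable def prodPiSuccIso {n : ℕ} (Z : Fin (n + 1) → E) :
    (Z 0 ⨯ ∏ᶜ fun i ↦ Z (Fin.succ i)) ≅ ∏ᶜ Z where
  hom := Pi.lift (Fin.cons prod.fst fun i ↦ prod.snd ≫ Pi.π (fun i ↦ Z (Fin.succ i)) i)
  inv := prod.lift (Pi.π Z 0) (Pi.lift fun i ↦ Pi.π Z (Fin.succ i))
  hom_inv_id := by
    apply prod.hom_ext
    · simp [prod.lift_fst]
    · apply Pi.hom_ext
      intro i
      simp [prod.lift_snd_assoc]
  inv_hom_id := by
    apply Pi.hom_ext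
    intro o
    cases o using Fin.cases <;> simp [prod.lift_fst, prod.lift_snd_assoc]

lemma prod_map_prodPiSuccIso_hom {n : ℕ} {Z W : Fin (n + 1) → E}
    (f : ∀ o, Z o ⟶ W o) :
    prod.map (f 0) (Limits.Pi.map fun i ↦ f (Fin.succ i)) ≫ (prodPiSuccIso W).hom =
      (prodPiSuccIso Z).hom ≫ Limits.Pi.map f := by
  apply Pi.hom_ext
  intro o
  cases o using Fin.cases <;> simp [prodPiSuccIso, prod.map_fst, prod.map_snd_assoc]

lemma pi_map_comp_prodPiSuccIso_inv_comp {n : ℕ} {Z W : Fin (n + 1) → E} {T : E}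
    (f : ∀ o, Z o ⟶ W o) (t : (W 0 ⨯ ∏ᶜ fun i ↦ W (Fin.succ i)) ⟶ T) :
    Limits.Pi.map f ≫ (prodPiSuccIso W).inv ≫ t =
      (prodPiSuccIso Z).inv ≫ prod.map (f 0) (Limits.Pi.map fun i ↦ f (Fin.succ i)) ≫ t := by
  rw [Iso.eq_inv_comp, ← Category.assoc, ← prod_map_prodPiSuccIso_hom, Category.assoc,
    Iso.hom_inv_id_assoc]

lemma coconePointwiseProduct_ι_app_eq {ι : Type} [Finite ι] {J : ι → Type u}
    [∀ i, SmallCategory (J i)] {K : ∀ i, J i ⥤ E} (c : ∀ i, Cocone (K i)) (j : ∀ i, J i) :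
    (coconePointwiseProduct c).ι.app j = Limits.Pi.map (fun i ↦ (c i).ι.app (j i)) :=
  Category.comp_id _

/-- Cocones on a pointwise product, and morphisms out of them, in elementary terms. -/
lemma nonempty_isColimit_coconePointwiseProduct_iff {ι : Type} [Finite ι] {J : ι → Type u}
    [∀ i, SmallCategory (J i)] {K : ∀ i, J i ⥤ E} (c : ∀ i, Cocone (K i)) :
    Nonempty (IsColimit (coconePointwiseProduct c)) ↔
      ∀ (Y : E) (φ : ∀ j : ∀ i, J i, (∏ᶜ fun i ↦ (K i).obj (j i)) ⟶ Y),
        (∀ (j j' : ∀ i, J i) (f : ∀ i, j i ⟶ j' i),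
          Limits.Pi.map (fun i ↦ (K i).map (f i)) ≫ φ j' = φ j) →
        ∃! d : (∏ᶜ fun i ↦ (c i).pt) ⟶ Y,
          ∀ j : ∀ i, J i, Limits.Pi.map (fun i ↦ (c i).ι.app (j i)) ≫ d = φ j := by
  constructor
  · rintro ⟨h⟩ Y φ hφ
    let s : Cocone (pointwiseProduct K) :=
      { pt := Y
        ι := { app := φ
               naturality := fun j j' f ↦ (hφ j j' f).trans (Category.comp_id _).symm } }
    refine ⟨h.desc s, fun j ↦ ?_, fun d hd ↦ h.uniq s d fun j ↦ ?_⟩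
    · have := h.fac s j
      rwa [coconePointwiseProduct_ι_app_eq] at this
    · rw [coconePointwiseProduct_ι_app_eq]
      exact hd j
  · intro h
    have h' (s : Cocone (pointwiseProduct K)) := h s.pt s.ι.app fun j j' f ↦ s.w f
    choose d hd hu using h'
    exact ⟨⟨d, fun s j ↦ by rw [coconePointwiseProduct_ι_app_eq]; exact hd s j,
      fun s m hm ↦ hu s m fun j ↦ by rw [← coconePointwiseProduct_ι_app_eq]; exact hm j⟩⟩

lemma nonempty_isColimit_coconePointwiseProduct_succ
    (hE : ∀ A : E, PreservesColimitsOfSize.{u, u} (prod.functor.obj A))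
    {n : ℕ} {J : Fin (n + 1) → Type u}
    [∀ i, SmallCategory (J i)] {K : ∀ i, J i ⥤ E} (c : ∀ i, Cocone (K i))
    (hc : IsColimit (c 0))
    (hc' : IsColimit (coconePointwiseProduct fun i ↦ c (Fin.succ i))) :
    Nonempty (IsColimit (coconePointwiseProduct c)) := by
  rw [nonempty_isColimit_coconePointwiseProduct_iff]
  intro Y φ hφ
  let A : E := ∏ᶜ fun i ↦ (c (Fin.succ i)).pt
  have := preservesColimits_prod_functor_flip_obj.{u} A
  have hA : IsColimit ((prod.functor.flip.obj A).mapCocone (c 0)) := isColimitOfPreserves _ hc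
  have hK (Z : E) : IsColimit ((prod.functor.obj Z).mapCocone
      (coconePointwiseProduct fun i ↦ c (Fin.succ i))) := isColimitOfPreserves _ hc'
  have extK {Z T : E} {f g : Z ⨯ A ⟶ T} (h : ∀ j : ∀ i, J (Fin.succ i),
      prod.map (𝟙 Z) (Limits.Pi.map fun i ↦ (c (Fin.succ i)).ι.app (j i)) ≫ f =
        prod.map (𝟙 Z) (Limits.Pi.map fun i ↦ (c (Fin.succ i)).ι.app (j i)) ≫ g) : f = g := by
    refine (hK Z).hom_ext fun j ↦ ?_
    have := h j
    rw [← coconePointwiseProduct_ι_app_eq] at this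
    exact this
  have extA {T : E} {f g : (c 0).pt ⨯ A ⟶ T} (h : ∀ j : J 0,
      prod.map ((c 0).ι.app j) (𝟙 A) ≫ f = prod.map ((c 0).ι.app j) (𝟙 A) ≫ g) : f = g :=
    hA.hom_ext h
  let pair (j₀ : J 0) (j : ∀ i, J (Fin.succ i)) : ∀ o, J o := Fin.cons j₀ j
  let pairMap {j₀ j₀' : J 0} {j j' : ∀ i, J (Fin.succ i)} (f₀ : j₀ ⟶ j₀')
      (f : ∀ i, j i ⟶ j' i) : ∀ o, pair j₀ j o ⟶ pair j₀' j' o := Fin.cons f₀ f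
  let ψ (j₀ : J 0) (j : ∀ i, J (Fin.succ i)) :
      ((K 0).obj j₀ ⨯ ∏ᶜ fun i ↦ (K (Fin.succ i)).obj (j i)) ⟶ Y :=
    (prodPiSuccIso fun o ↦ (K o).obj (pair j₀ j o)).hom ≫ φ (pair j₀ j)
  have hψ {j₀ j₀' : J 0} {j j' : ∀ i, J (Fin.succ i)} (f₀ : j₀ ⟶ j₀') (f : ∀ i, j i ⟶ j' i) :
      prod.map ((K 0).map f₀) (Limits.Pi.map fun i ↦ (K (Fin.succ i)).map (f i)) ≫ ψ j₀' j' =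
        ψ j₀ j := by
    have h₁ := prod_map_prodPiSuccIso_hom (fun o ↦ (K o).map (pairMap f₀ f o))
    have h₂ := hφ _ _ (pairMap f₀ f)
    dsimp only [ψ]
    rw [← h₂]
    exact (Category.assoc _ _ _).symm.trans ((congrArg (· ≫ _) h₁).trans (Category.assoc _ _ _))
  have exK (j₀ : J 0) : ∃ d : (K 0).obj j₀ ⨯ A ⟶ Y, ∀ j : ∀ i, J (Fin.succ i),
      prod.map (𝟙 _) (Limits.Pi.map fun i ↦ (c (Fin.succ i)).ι.app (j i)) ≫ d = ψ j₀ j := by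
    let s : Cocone ((pointwiseProduct fun i ↦ K (Fin.succ i)) ⋙
        prod.functor.obj ((K 0).obj j₀)) :=
      { pt := Y
        ι :=
          { app := ψ j₀
            naturality := fun j j' f ↦ by
              have := hψ (𝟙 j₀) f
              rw [CategoryTheory.Functor.map_id] at this
              exact this.trans (Category.comp_id _).symm } }
    refine ⟨(hK _).desc s, fun j ↦ ?_⟩
    rw [← coconePointwiseProduct_ι_app_eq]
    exact (hK _).fac s j
  choose d hd using exK
  have hd' {j₀ j₀' : J 0} (f : j₀ ⟶ j₀') : prod.map ((K 0).map f) (𝟙 A) ≫ d j₀' = d j₀ := by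
    refine extK fun j ↦ ?_
    have h₁ : prod.map ((K 0).map f) (𝟙 _) ≫ ψ j₀' j = ψ j₀ j := by
      simpa using hψ f (fun i ↦ 𝟙 (j i))
    rw [hd, ← h₁, ← hd]
    exact (prod_map_id_left_comp_map_id_right _ _ _).trans
      (prod_map_id_right_comp_map_id_left _ _ _).symm
  obtain ⟨t, ht⟩ : ∃ t : (c 0).pt ⨯ A ⟶ Y, ∀ j₀ : J 0,
      prod.map ((c 0).ι.app j₀) (𝟙 A) ≫ t = d j₀ := by
    let s : Cocone (K 0 ⋙ prod.functor.flip.obj A) :=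
      { pt := Y
        ι :=
          { app := d
            naturality := fun j₀ j₀' f ↦ (hd' f).trans (Category.comp_id _).symm } }
    exact ⟨hA.desc s, hA.fac s⟩
  have hψ' (j₀ : J 0) (j : ∀ i, J (Fin.succ i)) :
      prod.map ((c 0).ι.app j₀) (Limits.Pi.map fun i ↦ (c (Fin.succ i)).ι.app (j i)) ≫ t =
        ψ j₀ j := by
    rw [← hd, ← ht]
    exact (prod_map_id_left_comp_map_id_right _ _ _).symm
  have hι (j₀ : J 0) (j : ∀ i, J (Fin.succ i)) :
      prod.map ((c 0).ι.app j₀) (Limits.Pi.map fun i ↦ (c (Fin.succ i)).ι.app (j i)) ≫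
          (prodPiSuccIso fun o ↦ (c o).pt).hom =
        (prodPiSuccIso fun o ↦ (K o).obj (pair j₀ j o)).hom ≫
          Limits.Pi.map (fun o ↦ (c o).ι.app (pair j₀ j o)) :=
    prod_map_prodPiSuccIso_hom (W := fun o ↦ (c o).pt) fun o ↦ (c o).ι.app (pair j₀ j o)
  refine ⟨(prodPiSuccIso fun o ↦ (c o).pt).inv ≫ t, fun j ↦ ?_, fun m hm ↦ ?_⟩
  · obtain ⟨j₀, j, rfl⟩ : ∃ (j₀ : J 0) (j' : ∀ i, J (Fin.succ i)), pair j₀ j' = j :=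
      ⟨j 0, fun i ↦ j (Fin.succ i), by funext o; cases o using Fin.cases <;> rfl⟩
    exact (pi_map_comp_prodPiSuccIso_inv_comp (W := fun o ↦ (c o).pt)
      (fun o ↦ (c o).ι.app (pair j₀ j o)) t).trans
        ((congrArg (_ ≫ ·) (hψ' j₀ j)).trans (Iso.inv_hom_id_assoc _ _))
  · rw [Iso.eq_inv_comp]
    refine extA fun j₀ ↦ extK fun j ↦ ?_
    rw [ht, hd]
    refine (prod_map_id_left_comp_map_id_right _ _ _).trans ?_
    dsimp only [ψ]
    rw [← hm]
    exact (Category.assoc _ _ _).symm.trans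
      ((congrArg (· ≫ m) (hι j₀ j)).trans (Category.assoc _ _ _))

lemma nonempty_isColimit_coconePointwiseProduct
    (hE : ∀ A : E, PreservesColimitsOfSize.{u, u} (prod.functor.obj A)) {n : ℕ}
    {J : Fin n → Type u} [∀ i, SmallCategory (J i)] {K : ∀ i, J i ⥤ E} {c : ∀ i, Cocone (K i)}
    (hc : ∀ i, IsColimit (c i)) : Nonempty (IsColimit (coconePointwiseProduct c)) := by
  induction n with
  | zero =>
    rw [nonempty_isColimit_coconePointwiseProduct_iff]
    intro Y φ _
    refine ⟨Limits.Pi.map (fun i ↦ i.elim0) ≫ φ (fun i ↦ i.elim0), fun j ↦ ?_, fun m hm ↦ ?_⟩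
    · obtain rfl : (fun i ↦ i.elim0) = j := Subsingleton.elim _ _
      rw [← Category.assoc]
      refine Eq.trans (congrArg (· ≫ _) ?_) (Category.id_comp _)
      exact Pi.hom_ext _ _ fun i ↦ i.elim0
    · rw [← hm, ← Category.assoc]
      refine Eq.trans (Category.id_comp _).symm (congrArg (· ≫ _) ?_)
      exact Pi.hom_ext _ _ fun i ↦ i.elim0
  | succ n ih =>
    obtain ⟨h⟩ := ih (fun i ↦ hc i.succ)
    exact nonempty_isColimit_coconePointwiseProduct_succ hE c (hc 0) h

end PointwiseProduct

section LeftKanExtension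

variable {E : Type e} [Category.{w} E] {B : Type u} [SmallCategory B] {C : Type v} [Category.{u} C]

/-- The canonical morphism from `X.obj b` to the value at `c` of the left Kan extension,
associated with a morphism `F.obj b ⟶ c`. -/
noncomputable def lanIncl [HasColimitsOfSize.{u, u} E] (F : B ⥤ C) (X : B ⥤ E)
    {b : B} {c : C} (z : F.obj b ⟶ c) :
    X.obj b ⟶ (F.pointwiseLeftKanExtension X).obj c :=
  colimit.ι (CostructuredArrow.proj F c ⋙ X) (CostructuredArrow.mk z)

lemma map_lanIncl [HasColimitsOfSize.{u, u} E] (F : B ⥤ C) (X : B ⥤ E)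
    {b b' : B} {c : C} (g : b ⟶ b') (z : F.obj b' ⟶ c) :
    X.map g ≫ lanIncl F X z = lanIncl F X (F.map g ≫ z) :=
  colimit.w (CostructuredArrow.proj F c ⋙ X)
    (CostructuredArrow.homMk g : CostructuredArrow.mk (F.map g ≫ z) ⟶ CostructuredArrow.mk z)

lemma lanIncl_map [HasColimitsOfSize.{u, u} E] (F : B ⥤ C) (X : B ⥤ E)
    {b : B} {c c' : C} (z : F.obj b ⟶ c) (g : c ⟶ c') :
    lanIncl F X z ≫ (F.pointwiseLeftKanExtension X).map g = lanIncl F X (z ≫ g) :=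
  colimit.ι_desc _ _

variable [HasFiniteProducts E] [HasFiniteProducts B]

lemma PreservesProduct.iso_inv_naturality {n : ℕ} (X : B ⥤ E) [PreservesFiniteProducts X]
    {b b' : Fin n → B} (g : ∀ i, b i ⟶ b' i) :
    Limits.Pi.map (fun i ↦ X.map (g i)) ≫ (PreservesProduct.iso X b').inv =
      (PreservesProduct.iso X b).inv ≫ X.map (Limits.Pi.map g) := by
  rw [Iso.comp_inv_eq, Category.assoc, Iso.eq_inv_comp]
  apply Pi.hom_ext
  intro i
  simp only [Category.assoc, PreservesProduct.iso_hom, piComparison_comp_π, Limits.Pi.map_π,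
    piComparison_comp_π_assoc, ← X.map_comp]

lemma lift_id_comp_preservesProduct_iso_inv {n : ℕ} (X : B ⥤ E) [PreservesFiniteProducts X]
    (b : B) :
    Pi.lift (fun _ : Fin n ↦ 𝟙 (X.obj b)) ≫ (PreservesProduct.iso X fun _ : Fin n ↦ b).inv =
      X.map (Pi.lift fun _ : Fin n ↦ 𝟙 b) := by
  rw [Iso.comp_inv_eq]
  apply Pi.hom_ext
  intro i
  rw [Category.assoc, PreservesProduct.iso_hom, piComparison_comp_π, ← X.map_comp,
    Pi.lift_π, Pi.lift_π, X.map_id]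

lemma isIso_piComparison_pointwiseLeftKanExtension [HasColimitsOfSize.{u, u} E]
    (hE : ∀ A : E, PreservesColimitsOfSize.{u, u} (prod.functor.obj A))
    (F : B ⥤ C) (X : B ⥤ E) [PreservesFiniteProducts X] {n : ℕ} (f : Fin n → C) [HasProduct f] :
    IsIso (piComparison (F.pointwiseLeftKanExtension X) f) := by
  obtain ⟨h⟩ := nonempty_isColimit_coconePointwiseProduct hE
    fun i : Fin n ↦ colimit.isColimit (CostructuredArrow.proj F (f i) ⋙ X)
  have h := (nonempty_isColimit_coconePointwiseProduct_iff _).1 ⟨h⟩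
  let L := F.pointwiseLeftKanExtension X
  let z (j : ∀ i, CostructuredArrow F (f i)) : F.obj (∏ᶜ fun i ↦ (j i).left) ⟶ ∏ᶜ f :=
    Pi.lift fun i ↦ F.map (Pi.π (fun i ↦ (j i).left) i) ≫ (j i).hom
  have hz (j : ∀ i, CostructuredArrow F (f i)) (i : Fin n) :
      z j ≫ Pi.π f i = F.map (Pi.π (fun i ↦ (j i).left) i) ≫ (j i).hom := Pi.lift_π _ _
  let φ (j : ∀ i, CostructuredArrow F (f i)) :
      (∏ᶜ fun i ↦ X.obj (j i).left) ⟶ L.obj (∏ᶜ f) :=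
    (PreservesProduct.iso X fun i ↦ (j i).left).inv ≫ lanIncl F X (z j)
  have hφ (j j' : ∀ i, CostructuredArrow F (f i)) (g : ∀ i, j i ⟶ j' i) :
      Limits.Pi.map (fun i ↦ X.map (g i).left) ≫ φ j' = φ j := by
    have h₁ : F.map (Limits.Pi.map fun i ↦ (g i).left) ≫ z j' = z j := by
      apply Pi.hom_ext
      intro i
      rw [Category.assoc, hz, hz, ← F.map_comp_assoc, Limits.Pi.map_π, F.map_comp_assoc,
        CostructuredArrow.w]
    dsimp only [φ]
    rw [← h₁, ← map_lanIncl, ← Category.assoc, PreservesProduct.iso_inv_naturality,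
      Category.assoc]
  obtain ⟨d, hd⟩ : ∃ d : (∏ᶜ fun i ↦ L.obj (f i)) ⟶ L.obj (∏ᶜ f),
      ∀ j : ∀ i, CostructuredArrow F (f i),
        Limits.Pi.map (fun i ↦ lanIncl F X (j i).hom) ≫ d = φ j := (h _ φ hφ).exists
  have ext {T : E} {p q : (∏ᶜ fun i ↦ L.obj (f i)) ⟶ T}
      (hpq : ∀ j : ∀ i, CostructuredArrow F (f i),
        Limits.Pi.map (fun i ↦ lanIncl F X (j i).hom) ≫ p =
          Limits.Pi.map (fun i ↦ lanIncl F X (j i).hom) ≫ q) :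
      p = q := by
    refine (h T (fun j ↦ Limits.Pi.map (fun i ↦ lanIncl F X (j i).hom) ≫ q)
      fun j j' g ↦ ?_).unique hpq fun _ ↦ rfl
    refine (Category.assoc _ _ _).symm.trans (congrArg (· ≫ q) ?_)
    refine (Limits.Pi.map_comp_map _ _).trans (congrArg Limits.Pi.map (funext fun i ↦ ?_))
    exact (map_lanIncl F X (g i).left (j' i).hom).trans
      (congrArg (lanIncl F X) (CostructuredArrow.w (g i)))
  refine ⟨d, ?_, ?_⟩
  · refine colimit.hom_ext fun a ↦ ?_
    change lanIncl F X a.hom ≫ piComparison L f ≫ d = lanIncl F X a.hom ≫ 𝟙 _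
    let j : ∀ i, CostructuredArrow F (f i) := fun i ↦ CostructuredArrow.mk (a.hom ≫ Pi.π f i)
    have h₁ : lanIncl F X a.hom ≫ piComparison L f =
        Pi.lift (fun _ ↦ 𝟙 (X.obj a.left)) ≫
          Limits.Pi.map (fun i ↦ lanIncl F X (j i).hom) := by
      apply Pi.hom_ext
      intro i
      rw [Category.assoc, piComparison_comp_π, lanIncl_map, Category.assoc, Limits.Pi.map_π,
        Pi.lift_π_assoc]
      exact (Category.id_comp _).symm
    have h₂ : F.map (Pi.lift fun _ ↦ 𝟙 a.left) ≫ z j = a.hom := by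
      apply Pi.hom_ext
      intro i
      have h₃ : F.map (Pi.lift fun _ : Fin n ↦ 𝟙 a.left) ≫
          F.map (Pi.π (fun _ : Fin n ↦ a.left) i) = 𝟙 _ := by
        rw [← F.map_comp, Pi.lift_π, F.map_id]
      rw [Category.assoc, hz]
      exact (Category.assoc _ _ _).symm.trans
        ((congrArg (· ≫ _) h₃).trans (Category.id_comp _))
    have h₄ : Pi.lift (fun _ ↦ 𝟙 (X.obj a.left)) ≫ φ j = lanIncl F X a.hom := by
      refine Eq.trans ?_ (congrArg (lanIncl F X) h₂)
      rw [← map_lanIncl]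
      exact (Category.assoc _ _ _).symm.trans
        (congrArg (· ≫ _) (lift_id_comp_preservesProduct_iso_inv X a.left))
    rw [← Category.assoc, h₁, Category.assoc, hd, Category.comp_id, h₄]
  · refine ext fun j ↦ ?_
    change _ ≫ d ≫ piComparison L f = _ ≫ 𝟙 (∏ᶜ fun i ↦ L.obj (f i))
    rw [← Category.assoc, hd, Category.comp_id]
    apply Pi.hom_ext
    intro i
    have h₁ : (PreservesProduct.iso X fun i ↦ (j i).left).inv ≫
        X.map (Pi.π (fun i ↦ (j i).left) i) = Pi.π (fun i ↦ X.obj (j i).left) i := by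
      rw [Iso.inv_comp_eq, PreservesProduct.iso_hom, piComparison_comp_π]
    change (φ j ≫ piComparison L f) ≫ Pi.π (fun i ↦ L.obj (f i)) i = _
    rw [Category.assoc, piComparison_comp_π, Limits.Pi.map_π, Category.assoc, lanIncl_map, hz,
      ← map_lanIncl, ← Category.assoc, h₁]

end LeftKanExtension

theorem statement13 {E : Type e} [Category.{w} E] [HasFiniteProducts E]
    [HasColimitsOfSize.{u, u} E]
    (hE : ∀ C : E, PreservesColimitsOfSize.{u, u} (prod.functor.obj C))
    {B : Type u} [SmallCategory B] [HasFiniteProducts B]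
    {C : Type v} [Category.{u} C] (F : B ⥤ C) (X : B ⥤ E)
    [PreservesFiniteProducts X] :
    PreservesFiniteProducts (F.pointwiseLeftKanExtension X) := by
  refine ⟨fun n ↦ ⟨fun {K} ↦ ?_⟩⟩
  refine ⟨fun {c} hc ↦ ?_⟩
  let e := Discrete.natIsoFunctor (F := K)
  have : HasLimit K := ⟨⟨c, hc⟩⟩
  have : HasProduct (K.obj ∘ Discrete.mk) := hasLimit_of_iso e
  have := isIso_piComparison_pointwiseLeftKanExtension hE F X (K.obj ∘ Discrete.mk)
  have := PreservesProduct.of_iso_comparison (F.pointwiseLeftKanExtension X)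
    (K.obj ∘ Discrete.mk)
  have := preservesLimit_of_iso_diagram (F.pointwiseLeftKanExtension X) e.symm
  exact ⟨isLimitOfPreserves _ hc⟩
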